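/- For all n ≥ 1, β_n = (n+1)! + (-1)^n - 2(n+1)·d_n. (Here the identity is between integers, with β_n and d_n regarded as integers.) -/

import Mathlib

open Classical

noncomputable section

/-- `π` has at least one fixed point. -/
def hasFP {n : ℕ} (π : Equiv.Perm (Fin n)) : Prop := ∃ i, π i = i

/-- The set of (1-based) values of the fixed points of `π`, viewing a permutation of
`Fin n` as a permutation of `[n] = {1, …, n}` via `i ↦ i + 1`. -/
def fixVals {n : ℕ} (π : Equiv.Perm (Fin n)) : Set ℕ :=
  {k | ∃ i : Fin n, π i = i ∧ (i : ℕ) + 1 = k}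

/-- The largest fixed point `ℓ(π)` (in 1-based indexing). -/
def lfp {n : ℕ} (π : Equiv.Perm (Fin n)) : ℕ := sSup (fixVals π)

/-- The smallest fixed point `s(π)` (in 1-based indexing). -/
def sfp {n : ℕ} (π : Equiv.Perm (Fin n)) : ℕ := sInf (fixVals π)

/-- `d n` is the number of derangements of `[n]`. -/
def d (n : ℕ) : ℕ := Set.ncard {π : Equiv.Perm (Fin n) | ∀ i, π i ≠ i}

/-- `a n k` is the number of permutations of `[n]` with at least one fixed point
whose largest fixed point equals `k`. -/
def a (n k : ℕ) : ℕ := Set.ncard {π : Equiv.Perm (Fin n) | hasFP π ∧ lfp π = k}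

/-- `b n k` is the number of permutations of `[n]` with at least one fixed point
whose smallest fixed point equals `k`. -/
def b (n k : ℕ) : ℕ := Set.ncard {π : Equiv.Perm (Fin n) | hasFP π ∧ sfp π = k}

/-- `alpha n` is the sum of the largest fixed points over all non-derangements of `[n]`. -/
def alpha (n : ℕ) : ℕ :=
  ∑ π ∈ Finset.univ.filter (fun π : Equiv.Perm (Fin n) => hasFP π), lfp π

/-- `beta n` is the sum of the smallest fixed points over all non-derangements of `[n]`. -/
def beta (n : ℕ) : ℕ :=
  ∑ π ∈ Finset.univ.filter (fun π : Equiv.Perm (Fin n) => hasFP π), sfp π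

/-!
Inserting a new fixed point at position `k` into a permutation `π` of `[n]` gives a permutation of
`[n + 1]`, and the inserted point is its smallest fixed point exactly when `k` does not exceed the
smallest fixed point of `π`. There are `s(π)` such positions, or all `n + 1` of them when `π` is a
derangement. Every non-derangement of `[n + 1]` arises exactly once in this way, by deleting its
smallest fixed point, so `β_n + (n + 1) d_n = (n + 1)! - d_{n+1}`; now use the recurrence
`d_{n+1} = (n + 1) d_n - (-1)^n`.
-/

open Equiv Finset Function

section InsertFixedPoint

variable {n : ℕ}

/-- The permutation of `Fin (n + 1)` that fixes `k` and acts as `π` on the other points, which are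
identified with `Fin n` through `k.succAbove`. -/
def insertFixedPoint (k : Fin (n + 1)) (π : Perm (Fin n)) : Perm (Fin (n + 1)) :=
  (finSuccEquiv' k).symm.permCongr π.optionCongr

@[simp]
lemma insertFixedPoint_apply_self (k : Fin (n + 1)) (π : Perm (Fin n)) :
    insertFixedPoint k π k = k := by
  simp [insertFixedPoint]

@[simp]
lemma insertFixedPoint_apply_succAbove (k : Fin (n + 1)) (π : Perm (Fin n)) (i : Fin n) :
    insertFixedPoint k π (k.succAbove i) = k.succAbove (π i) := by
  simp [insertFixedPoint]

lemma insertFixedPoint_injective (k : Fin (n + 1)) : Injective (insertFixedPoint k) :=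
  (permCongr _).injective.comp optionCongr_injective

lemma exists_insertFixedPoint_eq {k : Fin (n + 1)} {σ : Perm (Fin (n + 1))} (hσ : σ k = k) :
    ∃ π, insertFixedPoint k π = σ := by
  let τ : Perm (Option (Fin n)) := (finSuccEquiv' k).permCongr σ
  have hτ : τ none = none := by simp [τ, hσ]
  refine ⟨removeNone τ, ?_⟩
  rw [insertFixedPoint, map_equiv_removeNone, hτ, swap_self, ← Perm.one_def, one_mul]
  exact (finSuccEquiv' k).permCongr.symm_apply_apply σ

lemma fixedPoints_insertFixedPoint (k : Fin (n + 1)) (π : Perm (Fin n)) :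
    fixedPoints (insertFixedPoint k π) = insert k (k.succAbove '' fixedPoints π) := by
  ext i
  obtain rfl | ⟨j, rfl⟩ := Fin.eq_self_or_eq_succAbove k i <;> simp [IsFixedPt]

lemma isLeast_fixedPoints_insertFixedPoint_iff {k : Fin (n + 1)} {π : Perm (Fin n)} :
    IsLeast (fixedPoints (insertFixedPoint k π)) k ↔
      k ∈ lowerBounds (Fin.castSucc '' fixedPoints π) := by
  have le_succAbove_iff (i : Fin n) : k ≤ k.succAbove i ↔ k ≤ i.castSucc := by
    rw [← Fin.lt_succAbove_iff_le_castSucc, le_iff_lt_or_eq,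
      or_iff_left (Fin.succAbove_ne k i).symm]
  simp [fixedPoints_insertFixedPoint, IsLeast, mem_lowerBounds, le_succAbove_iff]

end InsertFixedPoint

section LeastInsertions

variable {n : ℕ} {π : Perm (Fin n)}

lemma exists_isLeast_fixedPoints (h : hasFP π) : ∃ k, IsLeast (fixedPoints π) k :=
  have ⟨k, hk⟩ := (Set.toFinite (fixedPoints π)).exists_minimal h
  ⟨k, minimal_iff_isLeast.mp hk⟩

lemma sfp_eq_of_isLeast {k : Fin n} (hk : IsLeast (fixedPoints π) k) : sfp π = k + 1 :=
  have val_succ_mono : Monotone fun i : Fin n => (i : ℕ) + 1 := fun _ _ h => Nat.succ_le_succ h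
  (val_succ_mono.map_isLeast hk).csInf_eq

/-- The positions at which a new fixed point can be inserted into `π` so that it becomes the
smallest one. -/
def leastInsertions (π : Perm (Fin n)) : Finset (Fin (n + 1)) :=
  {k | IsLeast (fixedPoints (insertFixedPoint k π)) k}

@[simp]
lemma mem_leastInsertions {k : Fin (n + 1)} :
    k ∈ leastInsertions π ↔ IsLeast (fixedPoints (insertFixedPoint k π)) k := by
  simp [leastInsertions]

lemma card_leastInsertions_of_hasFP (h : hasFP π) : #(leastInsertions π) = sfp π := by
  obtain ⟨i, hi⟩ := exists_isLeast_fixedPoints h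
  have leastInsertions_eq : leastInsertions π = Iic i.castSucc := by
    ext k
    rw [mem_leastInsertions, isLeast_fixedPoints_insertFixedPoint_iff, mem_Iic,
      le_isGLB_iff (Fin.strictMono_castSucc.monotone.map_isLeast hi).isGLB]
  rw [leastInsertions_eq, Fin.card_Iic, Fin.val_castSucc, sfp_eq_of_isLeast hi]

lemma card_leastInsertions_of_not_hasFP (h : ¬hasFP π) : #(leastInsertions π) = n + 1 := by
  have fixedPoints_eq : fixedPoints π = ∅ := Set.not_nonempty_iff_eq_empty.mp h
  have leastInsertions_eq : leastInsertions π = univ := by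
    ext k
    simp [isLeast_fixedPoints_insertFixedPoint_iff, fixedPoints_eq]
  rw [leastInsertions_eq, card_univ, Fintype.card_fin]

lemma sum_card_leastInsertions (n : ℕ) :
    ∑ π : Perm (Fin n), #(leastInsertions π) = #{σ : Perm (Fin (n + 1)) | hasFP σ} := by
  rw [← card_sigma]
  refine card_bij (fun p _ => insertFixedPoint p.2 p.1) ?mapsTo ?injOn ?surjOn
  case mapsTo =>
    rintro ⟨π, k⟩ -
    exact mem_filter.mpr ⟨mem_univ _, k, insertFixedPoint_apply_self k π⟩
  case injOn =>
    rintro ⟨π, k⟩ hk ⟨π', k'⟩ hk' heq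
    simp only [mem_sigma, mem_univ, true_and, mem_leastInsertions] at hk hk' heq
    obtain rfl : k = k' := hk.unique (heq ▸ hk')
    rw [insertFixedPoint_injective k heq]
  case surjOn =>
    intro σ hσ
    obtain ⟨k, hk⟩ := exists_isLeast_fixedPoints (mem_filter.mp hσ).2
    obtain ⟨π, rfl⟩ := exists_insertFixedPoint_eq hk.1
    exact ⟨⟨π, k⟩, by simpa using hk, rfl⟩

end LeastInsertions

lemma d_eq_numDerangements (n : ℕ) : d n = numDerangements n := by
  rw [← card_derangements_fin_eq_numDerangements, ← Nat.card_eq_fintype_card]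
  exact (Nat.card_coe_set_eq _).symm

lemma card_not_hasFP (n : ℕ) : #{π : Perm (Fin n) | ¬hasFP π} = d n := by
  simp [d, hasFP, ← Set.ncard_coe_finset]

lemma card_hasFP_add_d (n : ℕ) : #{π : Perm (Fin n) | hasFP π} + d n = n.factorial := by
  rw [← card_not_hasFP, card_filter_add_card_filter_not, card_univ, Fintype.card_perm,
    Fintype.card_fin]

lemma sum_card_leastInsertions_eq_beta_add (n : ℕ) :
    ∑ π : Perm (Fin n), #(leastInsertions π) = beta n + (n + 1) * d n := by
  have sum_hasFP : ∑ π : Perm (Fin n) with hasFP π, #(leastInsertions π) = beta n :=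
    sum_congr rfl fun π hπ => card_leastInsertions_of_hasFP (mem_filter.mp hπ).2
  have sum_not_hasFP : ∑ π : Perm (Fin n) with ¬hasFP π, #(leastInsertions π) = (n + 1) * d n := by
    rw [sum_const_nat fun π hπ => card_leastInsertions_of_not_hasFP (mem_filter.mp hπ).2,
      card_not_hasFP, mul_comm]
  rw [← sum_filter_add_sum_filter_not univ hasFP, sum_hasFP, sum_not_hasFP]

theorem stmt12 (n : ℕ) (hn : 1 ≤ n) :
    (beta n : ℤ) = (n + 1).factorial + (-1) ^ n - 2 * (n + 1) * d n := by
  have double_count : beta n + (n + 1) * d n + d (n + 1) = (n + 1).factorial := by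
    rw [← sum_card_leastInsertions_eq_beta_add, sum_card_leastInsertions, card_hasFP_add_d]
  have d_succ : (d (n + 1) : ℤ) = (n + 1) * d n - (-1) ^ n := by
    simpa only [d_eq_numDerangements] using numDerangements_succ n
  have double_count_int : (beta n : ℤ) + (n + 1) * d n + d (n + 1) = (n + 1).factorial :=
    mod_cast double_count
  linear_combination double_count_int - d_succ
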